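/- arXiv:1910.03857 — 2 statements merged into one kernel-verified Lean document; each statement's English description precedes it below -/
import Mathlib

section
/- Assume π(a|s) > 0 and π̃(a|s) > 0 for all (s,a), and suppose there are constants C^∂ > 0, C_δ > 0, C^γ > 0 and vectors g(s,a) ∈ ℝ^d such that ‖g(s,a)‖₂ ≤ C^∂ and π(a|s)/π̃(a|s) ≤ C_δ for all (s,a), and such that for every trajectory τ and every T ∈ ℕ, ∑_{t=0}^{T} γ^t (ρ^{α_t}_{0:t}(τ))² ≤ C^γ. Let ε = max_{s,a} |A^π(s,a)| and define the ℝ^d-valued random vector G_T(τ) = ∑_{t=0}^{T} γ^t ρ^{α_t}_{0:t}(τ) (∑_{i=0}^{t} α_t^i · (π(a_i|s_i)/π̃(a_i|s_i)) · g(s_i,a_i)) · A^π(s_t,a_t) on trajectories τ ∼ π. Then for every T ∈ ℕ, tr Cov_{τ∼π}(G_T) ≤ ε² (C^∂)² C_δ² C^γ · ∑_{t=0}^{T} γ^t ‖α_t‖₁², where tr Cov(G) = E‖G‖₂² − ‖E G‖₂². -/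
open scoped BigOperators

namespace PolicyOpt

/-- A finite Markov decision process. -/
structure MDP (S A : Type*) [Fintype S] [Fintype A] where
  p : S → A → S → ℝ
  r : S → A → ℝ
  γ : ℝ
  μ0 : S → ℝ
  p_nonneg : ∀ s a s', 0 ≤ p s a s'
  p_sum_one : ∀ s a, ∑ s', p s a s' = 1
  μ0_nonneg : ∀ s, 0 ≤ μ0 s
  μ0_sum_one : ∑ s, μ0 s = 1
  γ_pos : 0 < γ
  γ_lt_one : γ < 1

variable {S A : Type*} [Fintype S] [Fintype A] [DecidableEq S] [DecidableEq A]

/-- A policy assigns to every state a probability distribution over actions. -/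
def IsPolicy (π : S → A → ℝ) : Prop :=
  (∀ s a, 0 ≤ π s a) ∧ ∀ s, ∑ a, π s a = 1

/-- Trajectory prefixes (histories) consisting of `t+1` state-action pairs. -/
abbrev Hist (S A : Type*) (t : ℕ) := Fin (t + 1) → S × A

/-- Probability of a history of length `t+1` when following policy `π`
starting from the initial distribution `μ0`. -/
noncomputable def prob (M : MDP S A) (π : S → A → ℝ) (t : ℕ) (h : Hist S A t) : ℝ :=
  (M.μ0 (h 0).1 * π (h 0).1 (h 0).2) *
    ∏ i : Fin t,
      (M.p (h i.castSucc).1 (h i.castSucc).2 (h i.succ).1 * π (h i.succ).1 (h i.succ).2)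

/-- Probability of a history of length `t+1` when following policy `π`,
conditioned on starting in state `s` with first action `a`. -/
noncomputable def probFrom (M : MDP S A) (π : S → A → ℝ) (s : S) (a : A) (t : ℕ) (h : Hist S A t) : ℝ :=
  (if h 0 = (s, a) then (1 : ℝ) else 0) *
    ∏ i : Fin t,
      (M.p (h i.castSucc).1 (h i.castSucc).2 (h i.succ).1 * π (h i.succ).1 (h i.succ).2)

/-- The last state-action pair of a history. -/
def lastSA {t : ℕ} (h : Hist S A t) : S × A := h (Fin.last t)

/-- State-action value `Q^π(s,a) = E_{τ∼π}[∑_{t≥0} γ^t r(s_t,a_t) | s₀=s, a₀=a]`. -/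
noncomputable def Qval (M : MDP S A) (π : S → A → ℝ) (s : S) (a : A) : ℝ :=
  ∑' t : ℕ, M.γ ^ t * ∑ h : Hist S A t, probFrom M π s a t h * M.r (lastSA h).1 (lastSA h).2

/-- State value `V^π(s)`. -/
noncomputable def Vval (M : MDP S A) (π : S → A → ℝ) (s : S) : ℝ :=
  ∑ a, π s a * Qval M π s a

/-- Advantage `A^π(s,a) = Q^π(s,a) - V^π(s)`. -/
noncomputable def Adv (M : MDP S A) (π : S → A → ℝ) (s : S) (a : A) : ℝ :=
  Qval M π s a - Vval M π s

/-- The value `η(π) = E_{τ∼π} ∑_{t≥0} γ^t r(s_t,a_t)`. -/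
noncomputable def ηval (M : MDP S A) (π : S → A → ℝ) : ℝ :=
  ∑' t : ℕ, M.γ ^ t * ∑ h : Hist S A t, prob M π t h * M.r (lastSA h).1 (lastSA h).2

/-- Normalised discounted state occupancy measure
`d^π(s) = (1-γ) ∑_{t≥0} γ^t Pr_{τ∼π}(s_t = s)`. -/
noncomputable def dOcc (M : MDP S A) (π : S → A → ℝ) (s : S) : ℝ :=
  (1 - M.γ) * ∑' t : ℕ, M.γ ^ t *
    ∑ h : Hist S A t, prob M π t h * (if (lastSA h).1 = s then (1 : ℝ) else 0)

/-- The surrogate objective `L_π(π') = (1/(1-γ)) ∑_s d^π(s) ∑_a π'(a|s) A^π(s,a)`. -/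
noncomputable def Lsur (M : MDP S A) (π π' : S → A → ℝ) : ℝ :=
  (1 - M.γ)⁻¹ * ∑ s, dOcc M π s * ∑ a, π' s a * Adv M π s a

/-- Product of importance sampling ratios `ρ_{0:t}` along a history. -/
noncomputable def ρprod (π π' : S → A → ℝ) {t : ℕ} (h : Hist S A t) : ℝ :=
  ∏ i, π' (h i).1 (h i).2 / π (h i).1 (h i).2

/-- Smoothed product of importance sampling ratios `ρ^{α}_{0:t}`. -/
noncomputable def ρpow (π π' : S → A → ℝ) {t : ℕ} (α : Fin (t + 1) → ℝ) (h : Hist S A t) : ℝ :=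
  ∏ i, (π' (h i).1 (h i).2 / π (h i).1 (h i).2) ^ (α i)

/-- The prefix of length `t+1` of a history of length `T+1` (for `t ≤ T`). -/
def pref {T : ℕ} (h : Hist S A T) (t : Fin (T + 1)) : Hist S A (t : ℕ) :=
  fun i => h (Fin.castLE t.isLt i)


theorem prob_snoc (M : MDP S A) (π : S → A → ℝ) (T : ℕ) (h : Hist S A T) (x : S × A) :
    prob M π (T + 1) (Fin.snoc (α := fun _ => S × A) h x) =
      prob M π T h * (M.p (h (Fin.last T)).1 (h (Fin.last T)).2 x.1 * π x.1 x.2) := by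
  unfold prob
  rw [Fin.prod_univ_castSucc, ← mul_assoc]
  have h0 : (Fin.snoc (α := fun _ => S × A) h x : Hist S A (T + 1)) 0 = h 0 := by
    rw [← Fin.castSucc_zero, Fin.snoc_castSucc]
  have h1 : ∀ i : Fin (T + 1),
      (Fin.snoc (α := fun _ => S × A) h x : Hist S A (T + 1)) i.castSucc = h i :=
    fun i => Fin.snoc_castSucc (α := fun _ => S × A) x h i
  have h2 : (Fin.snoc (α := fun _ => S × A) h x : Hist S A (T + 1)) (Fin.last T).succ = x := by
    rw [Fin.succ_last]
    exact Fin.snoc_last (α := fun _ => S × A) x h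
  have h3 : ∀ i : Fin T,
      (Fin.snoc (α := fun _ => S × A) h x : Hist S A (T + 1)) i.castSucc.succ = h i.succ := by
    intro i
    rw [Fin.succ_castSucc]
    exact h1 _
  simp only [h0, h1, h2, h3]

theorem prob_sum_one (M : MDP S A) (π : S → A → ℝ) (hπ : IsPolicy π) (T : ℕ) :
    ∑ h : Hist S A T, prob M π T h = 1 := by
  induction T with
  | zero =>
    rw [← (Equiv.funUnique (Fin 1) (S × A)).symm.sum_comp]
    simp only [prob, Fintype.sum_prod_type]
    simp [← Finset.mul_sum, hπ.2, M.μ0_sum_one]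
  | succ T ih =>
    rw [← (Fin.snocEquiv (fun _ : Fin (T + 2) => S × A)).sum_comp, Fintype.sum_prod_type,
      Finset.sum_comm]
    have key : ∀ h : Hist S A T, ∑ x : S × A,
        prob M π (T + 1) (Fin.snoc (α := fun _ => S × A) h x) = prob M π T h := by
      intro h
      simp only [prob_snoc, Fintype.sum_prod_type, ← Finset.mul_sum, hπ.2, mul_one, M.p_sum_one]
    exact (Finset.sum_congr rfl fun h _ => key h).trans ih

theorem prob_nonneg (M : MDP S A) (π : S → A → ℝ) (hπ : IsPolicy π) (T : ℕ) (h : Hist S A T) :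
    0 ≤ prob M π T h := by
  unfold prob
  exact mul_nonneg (mul_nonneg (M.μ0_nonneg _) (hπ.1 _ _))
    (Finset.prod_nonneg fun i _ => mul_nonneg (M.p_nonneg _ _ _) (hπ.1 _ _))

/-- Bound on the trace of the covariance of the gradient of the truncated
smoothed importance-sampling objective. -/
theorem trace_covariance_bound_smoothed_IS_gradient
    [Nonempty S] [Nonempty A]
    (M : MDP S A) (π π' : S → A → ℝ)
    (hπ : IsPolicy π) (hπ' : IsPolicy π')
    (hπpos : ∀ s a, 0 < π s a) (hπ'pos : ∀ s a, 0 < π' s a)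
    (d : ℕ) (g : S → A → EuclideanSpace ℝ (Fin d))
    (Cpar Cdelta Cgam : ℝ)
    (hCpar : 0 < Cpar) (hCdelta : 0 < Cdelta) (hCgam : 0 < Cgam)
    (hg : ∀ s a, ‖g s a‖ ≤ Cpar)
    (hratio : ∀ s a, π s a / π' s a ≤ Cdelta)
    (α : (t : ℕ) → Fin (t + 1) → ℝ) (hα : ∀ t i, α t i ∈ Set.Icc (0 : ℝ) 1)
    (hgam : ∀ (T : ℕ) (h : Hist S A T),
      ∑ t : Fin (T + 1), M.γ ^ (t : ℕ) * (ρpow π π' (α t) (pref h t)) ^ 2 ≤ Cgam)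
    (ε : ℝ)
    (hε : ε = Finset.univ.sup' Finset.univ_nonempty fun q : S × A => |Adv M π q.1 q.2|)
    (T : ℕ) :
    (∑ h : Hist S A T, prob M π T h *
        ‖∑ t : Fin (T + 1),
            (M.γ ^ (t : ℕ) * ρpow π π' (α t) (pref h t) * Adv M π (h t).1 (h t).2) •
              ∑ i, (α t i *
                  (π (pref h t i).1 (pref h t i).2 / π' (pref h t i).1 (pref h t i).2)) •
                g (pref h t i).1 (pref h t i).2‖ ^ 2) -
      ‖∑ h : Hist S A T, prob M π T h •
          ∑ t : Fin (T + 1),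
            (M.γ ^ (t : ℕ) * ρpow π π' (α t) (pref h t) * Adv M π (h t).1 (h t).2) •
              ∑ i, (α t i *
                  (π (pref h t i).1 (pref h t i).2 / π' (pref h t i).1 (pref h t i).2)) •
                g (pref h t i).1 (pref h t i).2‖ ^ 2 ≤
      ε ^ 2 * Cpar ^ 2 * Cdelta ^ 2 * Cgam *
        ∑ t : Fin (T + 1), M.γ ^ (t : ℕ) * (∑ i, |α t i|) ^ 2 := by
  have hAdv : ∀ s a, |Adv M π s a| ≤ ε := by
    intro s a
    rw [hε]
    exact Finset.le_sup' (fun q : S × A => |Adv M π q.1 q.2|) (Finset.mem_univ (s, a))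
  have hε0 : 0 ≤ ε :=
    (abs_nonneg _).trans (hAdv (Classical.arbitrary S) (Classical.arbitrary A))
  have hγ : ∀ t : ℕ, 0 ≤ M.γ ^ t := fun t => pow_nonneg M.γ_pos.le t
  have hρ : ∀ (t : ℕ) (h : Hist S A t), 0 ≤ ρpow π π' (α t) h := fun t h =>
    Finset.prod_nonneg fun i _ =>
      Real.rpow_nonneg (div_nonneg (hπ'pos _ _).le (hπpos _ _).le) _
  refine (sub_le_self _ (sq_nonneg _)).trans ?_
  have hmain : ∀ h : Hist S A T,
      ‖∑ t : Fin (T + 1),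
            (M.γ ^ (t : ℕ) * ρpow π π' (α t) (pref h t) * Adv M π (h t).1 (h t).2) •
              ∑ i, (α t i *
                  (π (pref h t i).1 (pref h t i).2 / π' (pref h t i).1 (pref h t i).2)) •
                g (pref h t i).1 (pref h t i).2‖ ^ 2 ≤
      ε ^ 2 * Cpar ^ 2 * Cdelta ^ 2 * Cgam *
        ∑ t : Fin (T + 1), M.γ ^ (t : ℕ) * (∑ i, |α t i|) ^ 2 := by
    intro h
    have hin : ∀ t : Fin (T + 1), ‖∑ i, (α t i *
                  (π (pref h t i).1 (pref h t i).2 / π' (pref h t i).1 (pref h t i).2)) •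
                g (pref h t i).1 (pref h t i).2‖ ≤ (∑ i, |α t i|) * (Cdelta * Cpar) := by
      intro t
      rw [Finset.sum_mul]
      refine (norm_sum_le _ _).trans (Finset.sum_le_sum fun i _ => ?_)
      rw [norm_smul, Real.norm_eq_abs, abs_mul, mul_assoc,
        abs_of_nonneg (div_nonneg (hπpos _ _).le (hπ'pos _ _).le)]
      exact mul_le_mul_of_nonneg_left
        (mul_le_mul (hratio _ _) (hg _ _) (norm_nonneg _) hCdelta.le) (abs_nonneg _)
    have hG : ‖∑ t : Fin (T + 1),
            (M.γ ^ (t : ℕ) * ρpow π π' (α t) (pref h t) * Adv M π (h t).1 (h t).2) •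
              ∑ i, (α t i *
                  (π (pref h t i).1 (pref h t i).2 / π' (pref h t i).1 (pref h t i).2)) •
                g (pref h t i).1 (pref h t i).2‖ ≤
        (ε * Cpar * Cdelta) * ∑ t : Fin (T + 1),
          M.γ ^ (t : ℕ) * ρpow π π' (α t) (pref h t) * ∑ i, |α t i| := by
      rw [Finset.mul_sum]
      refine (norm_sum_le _ _).trans (Finset.sum_le_sum fun t _ => ?_)
      have h0 : 0 ≤ M.γ ^ (t : ℕ) * ρpow π π' (α t) (pref h t) := mul_nonneg (hγ _) (hρ _ _)
      rw [norm_smul, Real.norm_eq_abs, abs_mul, abs_of_nonneg h0]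
      calc _ ≤ (M.γ ^ (t : ℕ) * ρpow π π' (α t) (pref h t) * ε) *
            ((∑ i, |α t i|) * (Cdelta * Cpar)) :=
            mul_le_mul (mul_le_mul_of_nonneg_left (hAdv _ _) h0) (hin t) (norm_nonneg _)
              (mul_nonneg h0 hε0)
        _ = _ := by ring
    have hCS : (∑ t : Fin (T + 1),
          M.γ ^ (t : ℕ) * ρpow π π' (α t) (pref h t) * ∑ i, |α t i|) ^ 2 ≤
        (∑ t : Fin (T + 1), M.γ ^ (t : ℕ) * (ρpow π π' (α t) (pref h t)) ^ 2) *
        ∑ t : Fin (T + 1), M.γ ^ (t : ℕ) * (∑ i, |α t i|) ^ 2 := by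
      refine Finset.sum_sq_le_sum_mul_sum_of_sq_eq_mul _
        (fun t _ => mul_nonneg (hγ _) (sq_nonneg _))
        (fun t _ => mul_nonneg (hγ _) (sq_nonneg _)) (fun t _ => by ring)
    have hS0 : 0 ≤ ∑ t : Fin (T + 1), M.γ ^ (t : ℕ) * (∑ i, |α t i|) ^ 2 :=
      Finset.sum_nonneg fun t _ => mul_nonneg (hγ _) (sq_nonneg _)
    calc _ ≤ _ := pow_le_pow_left₀ (norm_nonneg _) hG 2
      _ = (ε * Cpar * Cdelta) ^ 2 * _ := mul_pow _ _ 2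
      _ ≤ (ε * Cpar * Cdelta) ^ 2 *
          (Cgam * ∑ t : Fin (T + 1), M.γ ^ (t : ℕ) * (∑ i, |α t i|) ^ 2) :=
          mul_le_mul_of_nonneg_left
            (hCS.trans (mul_le_mul_of_nonneg_right (hgam T h) hS0)) (sq_nonneg _)
      _ = _ := by ring
  refine (Finset.sum_le_sum fun h _ =>
    mul_le_mul_of_nonneg_left (hmain h) (prob_nonneg M π hπ T h)).trans ?_
  rw [← Finset.sum_mul, prob_sum_one M π hπ T, one_mul]


end PolicyOpt
end

section
/- Assume π(a|s) > 0 for all (s,a). Then η(π̃) − η(π) = E_{τ∼π} ∑_{t≥0} γ^t ρ_{0:t}(τ) · A^π(s_t, a_t), where ρ_{0:t}(τ) = ∏_{i=0}^{t} π̃(a_i|s_i)/π(a_i|s_i). -/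
open scoped BigOperators

namespace PolicyOpt

variable {S A : Type*} [Fintype S] [Fintype A] [DecidableEq S] [DecidableEq A]

/-- One-step transition operator on state-action functions. -/
noncomputable def stepOp (M : MDP S A) (π : S → A → ℝ) : (S × A → ℝ) →ₗ[ℝ] (S × A → ℝ) where
  toFun f := fun x => ∑ y : S × A, (M.p x.1 x.2 y.1 * π y.1 y.2) * f y
  map_add' f g := by
    funext x
    simp [mul_add, Finset.sum_add_distrib]
  map_smul' c f := by
    funext x
    simp only [Pi.smul_apply, smul_eq_mul, RingHom.id_apply, Finset.mul_sum]
    exact Finset.sum_congr rfl fun y _ => by ring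

theorem stepOp_apply (M : MDP S A) (π : S → A → ℝ) (f : S × A → ℝ) (x : S × A) :
    stepOp M π f x = ∑ y : S × A, (M.p x.1 x.2 y.1 * π y.1 y.2) * f y := rfl

theorem sum_hist (M : MDP S A) (π : S → A → ℝ) (w : S × A → ℝ) (t : ℕ) :
    ∀ f : S × A → ℝ,
    ∑ h : Hist S A t, (w (h 0) * ∏ i : Fin t,
      (M.p (h i.castSucc).1 (h i.castSucc).2 (h i.succ).1 * π (h i.succ).1 (h i.succ).2))
        * f (lastSA h) = ∑ x, w x * ((stepOp M π) ^ t) f x := by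
  induction t with
  | zero =>
    intro f
    rw [← (Equiv.funUnique (Fin 1) (S × A)).symm.sum_comp]
    simp [lastSA]
  | succ t ih =>
    intro f
    rw [pow_succ, Module.End.mul_apply, ← ih]
    rw [← (Fin.snocEquiv (fun _ : Fin (t + 2) => S × A)).sum_comp, Fintype.sum_prod_type,
      Finset.sum_comm]
    refine Finset.sum_congr rfl fun h _ => ?_
    rw [stepOp_apply, Finset.mul_sum]
    refine Finset.sum_congr rfl fun y _ => ?_
    have h0 : (Fin.snocEquiv (fun _ : Fin (t + 2) => S × A) (y, h)) 0 = h 0 :=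
      Fin.snoc_castSucc (α := fun _ : Fin (t + 2) => S × A) y h 0
    have hl : (Fin.snocEquiv (fun _ : Fin (t + 2) => S × A) (y, h)) (Fin.last (t + 1)) = y :=
      Fin.snoc_last (α := fun _ : Fin (t + 2) => S × A) y h
    have hc : ∀ i : Fin (t + 1),
        (Fin.snocEquiv (fun _ : Fin (t + 2) => S × A) (y, h)) i.castSucc = h i := fun i =>
      Fin.snoc_castSucc (α := fun _ : Fin (t + 2) => S × A) y h i
    have hs : ∀ i : Fin t,
        (Fin.snocEquiv (fun _ : Fin (t + 2) => S × A) (y, h)) i.castSucc.succ = h i.succ := by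
      intro i
      rw [Fin.succ_castSucc, hc]
    rw [Fin.prod_univ_castSucc]
    simp only [lastSA, h0, hc, hs, hl, Fin.succ_last]
    ring

theorem stepOp_one (M : MDP S A) (π : S → A → ℝ) (hπ : IsPolicy π) (g : S → ℝ) (x : S × A) :
    stepOp M π (fun y => g y.1) x = ∑ s, M.p x.1 x.2 s * g s := by
  rw [stepOp_apply, Fintype.sum_prod_type]
  refine Finset.sum_congr rfl fun s _ => ?_
  have : ∀ a, M.p x.1 x.2 s * π s a * g s = (M.p x.1 x.2 s * g s) * π s a := fun a => by ring
  simp only [this]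
  rw [← Finset.mul_sum, hπ.2 s, mul_one]

theorem stepOp_bound (M : MDP S A) (π : S → A → ℝ) (hπ : IsPolicy π) (f : S × A → ℝ) (C : ℝ)
    (hf : ∀ x, |f x| ≤ C) (t : ℕ) : ∀ x, |((stepOp M π) ^ t) f x| ≤ C := by
  induction t with
  | zero => simpa using hf
  | succ t ih =>
    intro x
    rw [pow_succ', Module.End.mul_apply, stepOp_apply]
    refine (Finset.abs_sum_le_sum_abs _ _).trans ?_
    have h1 : ∑ y : S × A, (M.p x.1 x.2 y.1 * π y.1 y.2) * C = C := by
      have := stepOp_one M π hπ (fun _ => C) x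
      rw [stepOp_apply] at this
      rw [this, ← Finset.sum_mul, M.p_sum_one, one_mul]
    refine le_trans (Finset.sum_le_sum fun y _ => ?_) h1.le
    have hn : 0 ≤ M.p x.1 x.2 y.1 * π y.1 y.2 := mul_nonneg (M.p_nonneg _ _ _) (hπ.1 _ _)
    rw [abs_mul, abs_of_nonneg hn]
    exact mul_le_mul_of_nonneg_left (ih y) hn

theorem stepOp_summable (M : MDP S A) (π : S → A → ℝ) (hπ : IsPolicy π) (f : S × A → ℝ)
    (x : S × A) : Summable fun t : ℕ => M.γ ^ t * ((stepOp M π) ^ t) f x := by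
  have hf : ∀ x, |f x| ≤ ∑ y, |f y| := fun x =>
    Finset.single_le_sum (f := fun y => |f y|) (fun y _ => abs_nonneg _) (Finset.mem_univ x)
  refine Summable.of_norm_bounded (g := fun t => M.γ ^ t * ∑ y, |f y|)
    ((summable_geometric_of_lt_one M.γ_pos.le M.γ_lt_one).mul_right _) fun t => ?_
  rw [Real.norm_eq_abs, abs_mul, abs_of_nonneg (pow_nonneg M.γ_pos.le t)]
  exact mul_le_mul_of_nonneg_left (stepOp_bound M π hπ f _ hf t x) (pow_nonneg M.γ_pos.le t)

theorem hasSum_weighted (M : MDP S A) (π : S → A → ℝ) (hπ : IsPolicy π) (f w : S × A → ℝ) :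
    HasSum (fun t : ℕ => M.γ ^ t * ∑ x, w x * ((stepOp M π) ^ t) f x)
      (∑ x, w x * ∑' t : ℕ, M.γ ^ t * ((stepOp M π) ^ t) f x) := by
  have h := hasSum_sum (s := Finset.univ) fun (x : S × A) _ =>
    ((stepOp_summable M π hπ f x).hasSum.mul_left (w x))
  have e : (fun t : ℕ => M.γ ^ t * ∑ x, w x * ((stepOp M π) ^ t) f x)
      = fun t : ℕ => ∑ x, w x * (M.γ ^ t * ((stepOp M π) ^ t) f x) := by
    funext t
    rw [Finset.mul_sum]
    exact Finset.sum_congr rfl fun x _ => by ring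
  rw [e]
  exact h

theorem Qval_eq (M : MDP S A) (π : S → A → ℝ) (s : S) (a : A) :
    Qval M π s a = ∑' t : ℕ, M.γ ^ t * ((stepOp M π) ^ t) (fun y => M.r y.1 y.2) (s, a) := by
  unfold Qval
  refine tsum_congr fun t => ?_
  have h := sum_hist M π (fun x => if x = (s, a) then (1 : ℝ) else 0) t (fun y => M.r y.1 y.2)
  simp only [ite_mul, one_mul, zero_mul, Finset.sum_ite_eq', Finset.mem_univ, if_true] at h
  rw [← h]
  simp only [probFrom, ite_mul, one_mul, zero_mul]

theorem bellman (M : MDP S A) (π : S → A → ℝ) (hπ : IsPolicy π) (x : S × A) :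
    Qval M π x.1 x.2 = M.r x.1 x.2 + M.γ * ∑ s, M.p x.1 x.2 s * Vval M π s := by
  have h1 : ∑ s, M.p x.1 x.2 s * Vval M π s
      = ∑ y : S × A, (M.p x.1 x.2 y.1 * π y.1 y.2) * Qval M π y.1 y.2 := by
    rw [Fintype.sum_prod_type]
    refine Finset.sum_congr rfl fun s _ => ?_
    rw [Vval, Finset.mul_sum]
    exact Finset.sum_congr rfl fun a _ => by ring
  rw [h1, Qval_eq, (stepOp_summable M π hπ _ _).tsum_eq_zero_add]
  simp only [pow_zero, one_mul, Module.End.one_apply, Qval_eq]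
  congr 1
  have h := (hasSum_weighted M π hπ (fun y => M.r y.1 y.2)
    (fun y => M.p x.1 x.2 y.1 * π y.1 y.2)).mul_left M.γ
  rw [← h.tsum_eq]
  refine tsum_congr fun t => ?_
  rw [pow_succ' (stepOp M π), Module.End.mul_apply, stepOp_apply]
  ring

theorem sum_init (M : MDP S A) (π : S → A → ℝ) (hπ : IsPolicy π) (g : S → ℝ) :
    ∑ x : S × A, (M.μ0 x.1 * π x.1 x.2) * g x.1 = ∑ s, M.μ0 s * g s := by
  rw [Fintype.sum_prod_type]
  refine Finset.sum_congr rfl fun s _ => ?_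
  have : ∀ a, M.μ0 s * π s a * g s = (M.μ0 s * g s) * π s a := fun a => by ring
  simp only [this]
  rw [← Finset.mul_sum, hπ.2 s, mul_one]

theorem prob_sum (M : MDP S A) (π : S → A → ℝ) (t : ℕ) (f : S × A → ℝ) :
    ∑ h : Hist S A t, prob M π t h * f (lastSA h)
      = ∑ x : S × A, (M.μ0 x.1 * π x.1 x.2) * ((stepOp M π) ^ t) f x :=
  sum_hist M π (fun x => M.μ0 x.1 * π x.1 x.2) t f

theorem prob_ρprod (M : MDP S A) (π π' : S → A → ℝ) (hπpos : ∀ s a, 0 < π s a) (t : ℕ)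
    (h : Hist S A t) : prob M π t h * ρprod π π' h = prob M π' t h := by
  unfold prob ρprod
  rw [Fin.prod_univ_succ, mul_mul_mul_comm, ← Finset.prod_mul_distrib]
  congr 1
  · have := (hπpos (h 0).1 (h 0).2).ne'
    field_simp
  · refine Finset.prod_congr rfl fun i _ => ?_
    have := (hπpos (h i.succ).1 (h i.succ).2).ne'
    field_simp

theorem ηval_eq (M : MDP S A) (π : S → A → ℝ) (hπ : IsPolicy π) :
    ηval M π = ∑ s, M.μ0 s * Vval M π s := by
  have h := hasSum_weighted M π hπ (fun y => M.r y.1 y.2) (fun x => M.μ0 x.1 * π x.1 x.2)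
  have h1 : ηval M π = ∑ x : S × A, (M.μ0 x.1 * π x.1 x.2) * Qval M π x.1 x.2 := by
    simp only [Qval_eq]
    rw [← h.tsum_eq]
    exact tsum_congr fun t => by
      rw [← prob_sum M π t (fun y => M.r y.1 y.2)]
  rw [h1, Fintype.sum_prod_type]
  refine Finset.sum_congr rfl fun s _ => ?_
  rw [Vval, Finset.mul_sum]
  exact Finset.sum_congr rfl fun a _ => by ring

/-- The importance-sampled form of the policy value difference:
`η(π̃) − η(π) = E_{τ∼π} ∑_{t≥0} γ^t ρ_{0:t}(τ) A^π(s_t,a_t)`. -/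
theorem value_difference_importance_sampling
    (M : MDP S A) (π π' : S → A → ℝ)
    (hπ : IsPolicy π) (hπ' : IsPolicy π')
    (hπpos : ∀ s a, 0 < π s a) :
    ηval M π' - ηval M π =
      ∑' t : ℕ, M.γ ^ t *
        ∑ h : Hist S A t, prob M π t h * (ρprod π π' h * Adv M π (lastSA h).1 (lastSA h).2) := by
  have hw' : ∀ t : ℕ, ∑ h : Hist S A t,
      prob M π t h * (ρprod π π' h * Adv M π (lastSA h).1 (lastSA h).2)
      = ∑ x : S × A, (M.μ0 x.1 * π' x.1 x.2) *
        ((stepOp M π') ^ t) (fun y => Adv M π y.1 y.2) x := by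
    intro t
    rw [← prob_sum]
    refine Finset.sum_congr rfl fun h _ => ?_
    rw [← mul_assoc, prob_ρprod M π π' hπpos]
  have hA : (fun y : S × A => Adv M π y.1 y.2)
      = (fun y : S × A => M.r y.1 y.2)
        + M.γ • stepOp M π' (fun y => Vval M π y.1) - (fun y : S × A => Vval M π y.1) := by
    funext y
    simp only [Pi.add_apply, Pi.sub_apply, Pi.smul_apply, smul_eq_mul]
    rw [stepOp_one M π' hπ', Adv, bellman M π hπ]
  have hr := hasSum_weighted M π' hπ' (fun y => M.r y.1 y.2) (fun x => M.μ0 x.1 * π' x.1 x.2)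
  have hV := (hasSum_weighted M π' hπ' (fun y => Vval M π y.1)
    (fun x => M.μ0 x.1 * π' x.1 x.2)).summable
  have hη' : ηval M π' = ∑' t : ℕ, M.γ ^ t * ∑ x : S × A, (M.μ0 x.1 * π' x.1 x.2) *
      ((stepOp M π') ^ t) (fun y => M.r y.1 y.2) x :=
    tsum_congr fun t => by rw [← prob_sum M π' t (fun y => M.r y.1 y.2)]
  have hη : ηval M π = ∑ x : S × A, (M.μ0 x.1 * π' x.1 x.2) * Vval M π x.1 := by
    rw [ηval_eq M π hπ, sum_init M π' hπ']
  have hterm : ∀ t : ℕ, M.γ ^ t * ∑ h : Hist S A t,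
      prob M π t h * (ρprod π π' h * Adv M π (lastSA h).1 (lastSA h).2)
      = M.γ ^ t * ∑ x : S × A, (M.μ0 x.1 * π' x.1 x.2) *
          ((stepOp M π') ^ t) (fun y => M.r y.1 y.2) x
        + M.γ ^ (t + 1) * ∑ x : S × A, (M.μ0 x.1 * π' x.1 x.2) *
          ((stepOp M π') ^ (t + 1)) (fun y => Vval M π y.1) x
        - M.γ ^ t * ∑ x : S × A, (M.μ0 x.1 * π' x.1 x.2) *
          ((stepOp M π') ^ t) (fun y => Vval M π y.1) x := by
    intro t
    rw [hw', hA, map_sub, map_add, map_smul, pow_succ (stepOp M π'), Module.End.mul_apply]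
    simp only [Pi.add_apply, Pi.sub_apply, Pi.smul_apply, smul_eq_mul, Finset.mul_sum,
      ← Finset.sum_add_distrib, ← Finset.sum_sub_distrib]
    exact Finset.sum_congr rfl fun x _ => by ring
  have hV1 := (summable_nat_add_iff 1).2 hV
  rw [tsum_congr hterm, (hr.summable.add hV1).tsum_sub hV, hr.summable.tsum_add hV1,
    hV.tsum_eq_zero_add, hη', hη]
  simp only [pow_zero, one_mul, Module.End.one_apply]
  ring

end PolicyOpt
end
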